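/- Fix D ∈ ℍ^{m×n}, Ω ⊆ Fin m × Fin n, and λ > 0. Let A : ℕ → ℍ^{m×r}, B : ℕ → ℍ^{r×n}, X : ℕ → ℍ^{m×n} satisfy the LRQD recurrences: for every k, X^k_{ij} = D_{ij} for (i,j) ∈ Ω and X^k_{ij} = (A^k·B^k)_{ij} otherwise; A^{k+1} = (X^k·(B^k)ᴴ + λ·A^k)·(B^k·(B^k)ᴴ + λ·I)⁻¹; B^{k+1} = ((A^{k+1})ᴴ·A^{k+1} + λ·I)⁻¹·((A^{k+1})ᴴ·X^k + λ·B^k). Assume the sequence {(A^k, B^k, X^k)} is bounded. Then there exists η > 0 such that for every k, (‖A^k − A^{k+1}‖_F² + ‖B^k − B^{k+1}‖_F² + ‖X^k − X^{k+1}‖_F²)^{1/2} ≥ η·G(A^k, B^k, X^k). -/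

import Mathlib

open scoped Quaternion Matrix
open Filter

/-- The Frobenius norm of a quaternion matrix. -/
noncomputable def frob {m n : ℕ} (A : Matrix (Fin m) (Fin n) ℍ[ℝ]) : ℝ :=
  Real.sqrt (∑ i, ∑ j, ‖A i j‖ ^ 2)

/-- The projected-gradient norm G(A,B,X) of f(A,B,X) = ½‖A·B − X‖_F² subject to
the constraints X_{ij} = D_{ij} on Ω. -/
noncomputable def pgnorm {m r n : ℕ} (Ω : Set (Fin m × Fin n)) [DecidablePred (· ∈ Ω)]
    (A : Matrix (Fin m) (Fin r) ℍ[ℝ]) (B : Matrix (Fin r) (Fin n) ℍ[ℝ])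
    (X : Matrix (Fin m) (Fin n) ℍ[ℝ]) : ℝ :=
  Real.sqrt (frob ((A * B - X) * Bᴴ) ^ 2 + frob (Aᴴ * (A * B - X)) ^ 2 +
    ∑ p : Fin m × Fin n, if p ∈ Ω then 0 else ‖(X - A * B) p.1 p.2‖ ^ 2)

open scoped Matrix.Norms.Frobenius in
theorem frob_eq_norm {m n : ℕ} (A : Matrix (Fin m) (Fin n) ℍ[ℝ]) : frob A = ‖A‖ := by
  rw [Matrix.frobenius_norm_def, frob, Real.sqrt_eq_rpow]
  simp

theorem frob_nonneg' {m n : ℕ} (A : Matrix (Fin m) (Fin n) ℍ[ℝ]) : 0 ≤ frob A :=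
  Real.sqrt_nonneg _

theorem frob_sq {m n : ℕ} (A : Matrix (Fin m) (Fin n) ℍ[ℝ]) :
    frob A ^ 2 = ∑ i, ∑ j, ‖A i j‖ ^ 2 := by
  rw [frob, Real.sq_sqrt]
  positivity

theorem frob_add_le {m n : ℕ} (A B : Matrix (Fin m) (Fin n) ℍ[ℝ]) :
    frob (A + B) ≤ frob A + frob B := by
  open scoped Matrix.Norms.Frobenius in
  simpa only [frob_eq_norm] using norm_add_le A B

theorem frob_sub_le {m n : ℕ} (A B : Matrix (Fin m) (Fin n) ℍ[ℝ]) :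
    frob (A - B) ≤ frob A + frob B := by
  open scoped Matrix.Norms.Frobenius in
  simpa only [frob_eq_norm] using norm_sub_le A B

theorem frob_smul' {m n : ℕ} (c : ℝ) (hc : 0 ≤ c) (A : Matrix (Fin m) (Fin n) ℍ[ℝ]) :
    frob (c • A) = c * frob A := by
  simp only [frob, Matrix.smul_apply, norm_smul, mul_pow, ← Finset.mul_sum]
  rw [Real.sqrt_mul (by positivity), Real.sqrt_sq (by positivity)]
  simp [abs_of_nonneg hc]

theorem frob_conjTranspose' {m n : ℕ} (A : Matrix (Fin m) (Fin n) ℍ[ℝ]) :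
    frob Aᴴ = frob A := by
  simp only [frob, Matrix.conjTranspose_apply, norm_star]
  rw [Finset.sum_comm]

theorem frob_mul_le {m r n : ℕ} (A : Matrix (Fin m) (Fin r) ℍ[ℝ])
    (B : Matrix (Fin r) (Fin n) ℍ[ℝ]) : frob (A * B) ≤ frob A * frob B := by
  refine abs_le_of_sq_le_sq' ?_ (mul_nonneg (frob_nonneg' _) (frob_nonneg' _)) |>.2
  rw [mul_pow, frob_sq, frob_sq, frob_sq, Finset.sum_mul]
  refine Finset.sum_le_sum fun i _ => ?_
  rw [Finset.sum_comm (f := fun i j => ‖B i j‖ ^ 2), Finset.mul_sum]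
  refine Finset.sum_le_sum fun j _ => ?_
  calc ‖(A * B) i j‖ ^ 2 ≤ (∑ k, ‖A i k‖ * ‖B k j‖) ^ 2 := by
        gcongr
        rw [Matrix.mul_apply]
        refine (norm_sum_le _ _).trans (Finset.sum_le_sum fun k _ => (norm_mul_le _ _))
    _ ≤ _ := Finset.sum_mul_sq_le_sq_mul_sq _ _ _

theorem coe_sum' {ι : Type*} (s : Finset ι) (f : ι → ℝ) :
    ((∑ i ∈ s, f i : ℝ) : ℍ[ℝ]) = ∑ i ∈ s, (f i : ℍ[ℝ]) :=
  map_sum (algebraMap ℝ ℍ[ℝ]) f s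

theorem trace_frob {m n : ℕ} (A : Matrix (Fin m) (Fin n) ℍ[ℝ]) :
    (Aᴴ * A).trace = ((frob A ^ 2 : ℝ) : ℍ[ℝ]) := by
  rw [frob_sq, Finset.sum_comm]
  simp only [Matrix.trace, Matrix.diag, Matrix.mul_apply, Matrix.conjTranspose_apply,
    Quaternion.star_mul_self, Quaternion.normSq_eq_norm_mul_self, ← pow_two]
  rw [coe_sum']
  refine Finset.sum_congr rfl fun j _ => ?_
  rw [coe_sum']

theorem frob_eq_zero' {m n : ℕ} (A : Matrix (Fin m) (Fin n) ℍ[ℝ]) (h : frob A = 0) :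
    A = 0 := by
  open scoped Matrix.Norms.Frobenius in
  rw [frob_eq_norm] at h
  exact norm_eq_zero.1 h

theorem isUnit_reg {r n : ℕ} (C : Matrix (Fin r) (Fin n) ℍ[ℝ]) (lam : ℝ) (hlam : 0 < lam) :
    IsUnit (C * Cᴴ + lam • (1 : Matrix (Fin r) (Fin r) ℍ[ℝ])) := by
  set P := C * Cᴴ + lam • (1 : Matrix (Fin r) (Fin r) ℍ[ℝ]) with hP
  have hPH : Pᴴ = P := by
    have h1 : (lam • (1 : Matrix (Fin r) (Fin r) ℍ[ℝ]))ᴴ = lam • 1 := by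
      refine Matrix.ext fun i j => ?_
      rw [Matrix.conjTranspose_apply, Matrix.smul_apply, Matrix.smul_apply, Quaternion.star_smul,
        ← Matrix.conjTranspose_apply, Matrix.conjTranspose_one]
    rw [hP, Matrix.conjTranspose_add, Matrix.conjTranspose_mul, h1,
      Matrix.conjTranspose_conjTranspose]
  have hinj : Function.Injective (LinearMap.mulLeft ℝ P) := by
    rw [injective_iff_map_eq_zero]
    intro Y hY
    have hY : P * Y = 0 := hY
    have h1 : (Cᴴ * Y)ᴴ * (Cᴴ * Y) + lam • (Yᴴ * Y) = 0 := by
      have : Yᴴ * (P * Y) = 0 := by rw [hY, mul_zero]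
      rw [← this, hP]
      simp [Matrix.add_mul, Matrix.mul_add, Matrix.conjTranspose_mul, Matrix.mul_assoc]
    have h2 := congrArg Matrix.trace h1
    rw [Matrix.trace_add, Matrix.trace_smul, trace_frob, trace_frob] at h2
    have h3 := congrArg QuaternionAlgebra.re h2
    simp only [Quaternion.re_add, Quaternion.re_smul, Quaternion.re_coe, Matrix.trace_zero,
      Quaternion.re_zero, smul_eq_mul] at h3
    apply frob_eq_zero'
    have : lam * frob Y ^ 2 = 0 := by nlinarith [sq_nonneg (frob (Cᴴ * Y)), mul_nonneg hlam.le (sq_nonneg (frob Y))]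
    have := (mul_eq_zero.1 this).resolve_left hlam.ne'
    exact pow_eq_zero_iff (two_ne_zero) |>.1 this
  obtain ⟨Q, hQ⟩ := LinearMap.injective_iff_surjective.1 hinj 1
  have hQ : P * Q = 1 := hQ
  have hQ2 : Qᴴ * P = 1 := by
    have := congrArg Matrix.conjTranspose hQ
    rwa [Matrix.conjTranspose_mul, hPH, Matrix.conjTranspose_one] at this
  have hQQ : Qᴴ = Q := left_inv_eq_right_inv hQ2 hQ
  exact ⟨⟨P, Q, hQ, hQQ ▸ hQ2⟩, rfl⟩

/-- Along a bounded LRQD sequence, the step length dominates a positive multiple of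
the projected-gradient norm. -/
theorem step_dominates_gradient {m r n : ℕ}
    (D : Matrix (Fin m) (Fin n) ℍ[ℝ]) (Ω : Set (Fin m × Fin n)) [DecidablePred (· ∈ Ω)]
    (lam : ℝ) (hlam : 0 < lam)
    (A : ℕ → Matrix (Fin m) (Fin r) ℍ[ℝ]) (B : ℕ → Matrix (Fin r) (Fin n) ℍ[ℝ])
    (X : ℕ → Matrix (Fin m) (Fin n) ℍ[ℝ])
    (hXin : ∀ k, ∀ p ∈ Ω, X k p.1 p.2 = D p.1 p.2)
    (hXout : ∀ k, ∀ p : Fin m × Fin n, p ∉ Ω → X k p.1 p.2 = (A k * B k) p.1 p.2)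
    (hA : ∀ k, A (k + 1) = (X k * (B k)ᴴ + lam • A k) *
      Ring.inverse (B k * (B k)ᴴ + lam • (1 : Matrix (Fin r) (Fin r) ℍ[ℝ])))
    (hB : ∀ k, B (k + 1) =
      Ring.inverse ((A (k + 1))ᴴ * A (k + 1) + lam • (1 : Matrix (Fin r) (Fin r) ℍ[ℝ])) *
      ((A (k + 1))ᴴ * X k + lam • B k))
    (hbdd : ∃ M : ℝ, ∀ k, frob (A k) ≤ M ∧ frob (B k) ≤ M ∧ frob (X k) ≤ M) :
    ∃ η : ℝ, 0 < η ∧ ∀ k,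
      Real.sqrt (frob (A k - A (k + 1)) ^ 2 + frob (B k - B (k + 1)) ^ 2 +
          frob (X k - X (k + 1)) ^ 2) ≥
        η * pgnorm Ω (A k) (B k) (X k) := by
  obtain ⟨M₀, hM₀⟩ := hbdd
  obtain ⟨M, hM0, hM⟩ : ∃ M : ℝ, 0 ≤ M ∧ ∀ k, frob (A k) ≤ M ∧ frob (B k) ≤ M ∧ frob (X k) ≤ M :=
    ⟨M₀, (frob_nonneg' _).trans (hM₀ 0).1, hM₀⟩
  have key : ∀ k, frob ((A k * B k - X k) * (B k)ᴴ) ≤ (M * M + lam) * frob (A k - A (k + 1)) ∧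
      frob ((A k)ᴴ * (A k * B k - X k)) ≤ (M * M + lam) * frob (B k - B (k + 1)) +
        (M * M + M + M * M) * frob (A k - A (k + 1)) := by
    intro k
    have e1 : (A k * B k - X k) * (B k)ᴴ =
        (A k - A (k + 1)) * B k * (B k)ᴴ + lam • (A k - A (k + 1)) := by
      have h := congrArg (· * (B k * (B k)ᴴ + lam • (1 : Matrix (Fin r) (Fin r) ℍ[ℝ]))) (hA k)
      simp only [Matrix.mul_assoc] at h
      rw [Ring.inverse_mul_cancel _ (isUnit_reg (B k) lam hlam)] at h
      simp only [Matrix.mul_add, Matrix.mul_smul, Matrix.mul_one] at h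
      simp only [Matrix.sub_mul, smul_sub, Matrix.mul_assoc]
      have h' := eq_sub_of_add_eq h
      rw [h']
      abel
    have e2 : (A (k + 1))ᴴ * (A (k + 1) * B k - X k) =
        (A (k + 1))ᴴ * (A (k + 1) * (B k - B (k + 1))) + lam • (B k - B (k + 1)) := by
      have h := congrArg (((A (k + 1))ᴴ * A (k + 1) + lam • (1 : Matrix (Fin r) (Fin r) ℍ[ℝ])) * ·)
        (hB k)
      have hu := isUnit_reg (A (k + 1))ᴴ lam hlam
      rw [Matrix.conjTranspose_conjTranspose] at hu
      simp only [← Matrix.mul_assoc] at h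
      rw [Ring.mul_inverse_cancel _ hu] at h
      simp only [Matrix.add_mul, Matrix.smul_mul, Matrix.one_mul, Matrix.mul_assoc] at h
      simp only [Matrix.mul_sub, smul_sub]
      have h' := eq_sub_of_add_eq h
      rw [h']
      abel
    have e3 : (A k)ᴴ * (A k * B k - X k) = ((A (k + 1))ᴴ * (A (k + 1) * (B k - B (k + 1)))
        + lam • (B k - B (k + 1))) + ((A k - A (k + 1))ᴴ * (A k * B k - X k)
        + (A (k + 1))ᴴ * ((A k - A (k + 1)) * B k)) := by
      rw [← e2]
      simp only [Matrix.mul_sub, Matrix.sub_mul, Matrix.conjTranspose_sub]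
      abel
    obtain ⟨hAk, hBk, hXk⟩ := hM k
    have hAk' := (hM (k + 1)).1
    have a0 := frob_nonneg' (A k - A (k + 1))
    have b0 := frob_nonneg' (B k - B (k + 1))
    have mulb : ∀ {p q s : ℕ} (U : Matrix (Fin p) (Fin q) ℍ[ℝ]) (V : Matrix (Fin q) (Fin s) ℍ[ℝ])
        (u v : ℝ), frob U ≤ u → frob V ≤ v → frob (U * V) ≤ u * v := by
      intro p q s U V u v hu hv
      exact (frob_mul_le U V).trans
        (mul_le_mul hu hv (frob_nonneg' _) ((frob_nonneg' _).trans hu))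
    have hBH : frob (B k)ᴴ ≤ M := by rwa [frob_conjTranspose']
    have hAH : frob (A (k + 1))ᴴ ≤ M := by rwa [frob_conjTranspose']
    constructor
    · rw [e1]
      have t1 := mulb _ _ _ _ (mulb _ _ _ _ (le_refl (frob (A k - A (k + 1)))) hBk) hBH
      have t2 := frob_add_le ((A k - A (k + 1)) * B k * (B k)ᴴ) (lam • (A k - A (k + 1)))
      rw [frob_smul' lam hlam.le] at t2
      nlinarith
    · rw [e3]
      have t1 := mulb _ _ _ _ hAH (mulb _ _ _ _ hAk' (le_refl (frob (B k - B (k + 1)))))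
      have t2 := mulb _ _ _ _ hAH (mulb _ _ _ _ (le_refl (frob (A k - A (k + 1)))) hBk)
      have t3 := (frob_sub_le (A k * B k) (X k)).trans (add_le_add (mulb _ _ _ _ hAk hBk) hXk)
      have t4 := mulb _ _ _ _ (frob_conjTranspose' (A k - A (k + 1))).le t3
      refine (frob_add_le _ _).trans ?_
      refine (add_le_add (frob_add_le _ _) (frob_add_le _ _)).trans ?_
      rw [frob_smul' lam hlam.le]
      linarith
  set C : ℝ := 3 * (M * M) + M + lam with hC
  have hCpos : 0 < C := by positivity
  refine ⟨1 / (3 * C), by positivity, fun k => ?_⟩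
  obtain ⟨k1, k2⟩ := key k
  have a0 := frob_nonneg' (A k - A (k + 1))
  have b0 := frob_nonneg' (B k - B (k + 1))
  have hsum : (∑ p : Fin m × Fin n, if p ∈ Ω then (0 : ℝ) else
      ‖(X k - A k * B k) p.1 p.2‖ ^ 2) = 0 := by
    refine Finset.sum_eq_zero fun p _ => ?_
    split_ifs with hp
    · rfl
    · rw [Matrix.sub_apply, hXout k p hp]; simp
  rw [pgnorm, hsum, add_zero]
  set a := frob (A k - A (k + 1))
  set b := frob (B k - B (k + 1))
  have g1 := frob_nonneg' ((A k * B k - X k) * (B k)ᴴ)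
  have g2 := frob_nonneg' ((A k)ᴴ * (A k * B k - X k))
  set p := frob ((A k * B k - X k) * (B k)ᴴ)
  set q := frob ((A k)ᴴ * (A k * B k - X k))
  have MM := mul_nonneg hM0 hM0
  have hp : p ≤ C * a := k1.trans (mul_le_mul_of_nonneg_right (by linarith) a0)
  have hq : q ≤ C * b + C * a := k2.trans (add_le_add
    (mul_le_mul_of_nonneg_right (by linarith) b0) (mul_le_mul_of_nonneg_right (by linarith) a0))
  rw [ge_iff_le, one_div, inv_mul_le_iff₀ (by positivity)]
  rw [Real.sqrt_le_left (by positivity), mul_pow, Real.sq_sqrt (by positivity)]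
  have hp2 : p ^ 2 ≤ (C * a) ^ 2 := pow_le_pow_left₀ g1 hp 2
  have hq2 : q ^ 2 ≤ (C * b + C * a) ^ 2 := pow_le_pow_left₀ g2 hq 2
  nlinarith [sq_nonneg (C * a - C * b), sq_nonneg (C * a), sq_nonneg (C * b),
    sq_nonneg (C * frob (X k - X (k + 1)))]
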